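/- Let n, m ≥ 1 and let u = (u_1,…,u_m) be a solution of system (S) on ℝⁿ. Write x = (x', x_n) ∈ ℝ^{n−1} × ℝ, and for R > 0 and x_n ∈ ℝ set Γ_R(x_n) := ∫_{B_R(0)⊂ℝ^{n−1}} ( ∑_{i=1}^m [ (1/2)Φ(|∇u_i(x',x_n)|²) − Φ'(|∇u_i(x',x_n)|²)|∂_{x_n}u_i(x',x_n)|² ] − H̃(u(x',x_n)) ) dx'. Assume: (i) for every x_n the integrand is integrable over ℝ^{n−1}, so that G(x_n) := lim_{R→∞} Γ_R(x_n) exists and is finite; (ii) for every R > 0 differentiation of Γ_R under the integral sign in x_n is justified; and (iii) for every x_n ∈ ℝ there is a sequence R_k → ∞ along which ∫_0^{x_n} ∫_{∂B_{R_k}(0)⊂ℝ^{n−1}} ∑_{i=1}^m Φ'(|∇u_i|²)(∂_{ν_{x'}}u_i)(∂_{x_n}u_i) dS(x') dt → 0, where ∂_{ν_{x'}} denotes the outward normal derivative in the x'-variables. Then G(x_n) = G(0) for all x_n ∈ ℝ, i.e. the Hamiltonian ∫_{ℝ^{n−1}} ( ∑_{i=1}^m [ (1/2)Φ(|∇u_i|²)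 − Φ'(|∇u_i|²)|∂_{x_n}u_i|² ] − H̃(u) ) dx' is constant in x_n. -/

import Mathlib

open MeasureTheory Metric Finset Filter
open scoped RealInnerProductSpace

noncomputable section

/-- Divergence of a vector field on Euclidean space. -/
def vdiv {N : ℕ} (F : EuclideanSpace ℝ (Fin N) → EuclideanSpace ℝ (Fin N))
    (x : EuclideanSpace ℝ (Fin N)) : ℝ :=
  ∑ i, fderiv ℝ F x (EuclideanSpace.single i 1) i

/-- The point `(x', t) ∈ ℝ^{n} × ℝ = ℝ^{n+1}`. -/
def emb {n : ℕ} (x' : EuclideanSpace ℝ (Fin n)) (t : ℝ) : EuclideanSpace ℝ (Fin (n + 1)) :=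
  (EuclideanSpace.equiv (Fin (n + 1)) ℝ).symm (Fin.snoc (fun j => x' j) t)

/-- The integrand of the Hamiltonian:
`∑ᵢ [ (1/2)Φ(|∇uᵢ|²) - Φ'(|∇uᵢ|²)|∂_{x_n}uᵢ|² ] - H̃(u)` evaluated at `(x', t)`. -/
def hamIntegrand {n m : ℕ} (Φ : ℝ → ℝ) (Ht : (Fin m → ℝ) → ℝ)
    (u : Fin m → EuclideanSpace ℝ (Fin (n + 1)) → ℝ)
    (x' : EuclideanSpace ℝ (Fin n)) (t : ℝ) : ℝ :=
  (∑ i, ((1 : ℝ) / 2 * Φ (‖gradient (u i) (emb x' t)‖ ^ 2)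
      - deriv Φ (‖gradient (u i) (emb x' t)‖ ^ 2)
        * (fderiv ℝ (u i) (emb x' t) (EuclideanSpace.single (Fin.last n) 1)) ^ 2))
    - Ht (fun j => u j (emb x' t))

lemma inv_prop_aux {X : Type*} [MetricSpace X] [CompactSpace X] [MeasurableSpace X] [BorelSpace X]
    (μ ν : Measure X) [IsFiniteMeasure μ] [IsFiniteMeasure ν] (k : X × X → ℝ)
    (hk : Measurable k) (hk1 : ∀ p, |k p| ≤ 1) (a b : ℝ)
    (ha : ∀ x, ∫ y, k (x, y) ∂ν = a) (hb : ∀ y, ∫ x, k (x, y) ∂μ = b)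
    (f : X → ℝ) (hf : Continuous f) :
    Integrable (fun p : X × X => f p.1 * k p) (μ.prod ν) ∧
    Integrable (fun p : X × X => f p.2 * k p) (μ.prod ν) ∧
    ∫ p : X × X, f p.1 * k p ∂(μ.prod ν) = a * ∫ x, f x ∂μ ∧
    ∫ p : X × X, f p.2 * k p ∂(μ.prod ν) = b * ∫ x, f x ∂ν := by
  obtain ⟨C, hC⟩ := isCompact_univ.exists_bound_of_continuousOn hf.continuousOn
  have hm1 : Measurable (fun p : X × X => f p.1) := hf.measurable.comp measurable_fst
  have hm2 : Measurable (fun p : X × X => f p.2) := hf.measurable.comp measurable_snd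
  have i1 : Integrable (fun p : X × X => f p.1 * k p) (μ.prod ν) := by
    refine Integrable.of_bound (hm1.mul hk).aestronglyMeasurable C (.of_forall fun p => ?_)
    rw [norm_mul]
    have := hC p.1 (Set.mem_univ _)
    calc _ ≤ ‖f p.1‖ * 1 := by gcongr; exact hk1 p
      _ ≤ C := by simpa using this
  have i2 : Integrable (fun p : X × X => f p.2 * k p) (μ.prod ν) := by
    refine Integrable.of_bound (hm2.mul hk).aestronglyMeasurable C (.of_forall fun p => ?_)
    rw [norm_mul]
    have := hC p.2 (Set.mem_univ _)
    calc _ ≤ ‖f p.2‖ * 1 := by gcongr; exact hk1 p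
      _ ≤ C := by simpa using this
  refine ⟨i1, i2, ?_, ?_⟩
  · rw [integral_prod _ i1]
    simp only [integral_const_mul, ha, integral_mul_const]
    ring
  · rw [integral_prod_symm _ i2]
    simp only [integral_const_mul, hb, integral_mul_const]
    ring

lemma inv_prop {X : Type*} [MetricSpace X] [CompactSpace X] [MeasurableSpace X] [BorelSpace X]
    (μ ν : Measure X) [IsFiniteMeasure μ] [IsFiniteMeasure ν] [ν.IsOpenPosMeasure]
    (hinv : ∀ x y : X, ∃ e : X ≃ᵢ X, e x = y ∧ MeasurePreserving e μ μ ∧ MeasurePreserving e ν ν)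
    (f : X → ℝ) (hf : Continuous f) :
    ν.real Set.univ * ∫ x, f x ∂μ = μ.real Set.univ * ∫ x, f x ∂ν := by
  rcases isEmpty_or_nonempty X with hX | ⟨⟨x0⟩⟩
  · simp [Measure.eq_zero_of_isEmpty]
  rw [← sub_eq_zero, ← abs_nonpos_iff]
  have huc := CompactSpace.uniformContinuous_of_continuous hf
  rw [Metric.uniformContinuous_iff] at huc
  set M := μ.real Set.univ * ν.real Set.univ with hM
  have hM0 : 0 ≤ M := by positivity
  suffices h : ∀ ε > 0, |ν.real Set.univ * ∫ x, f x ∂μ - μ.real Set.univ * ∫ x, f x ∂ν| ≤ ε * M by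
    refine le_of_forall_pos_le_add fun δ hδ => ?_
    refine (h (δ / (M + 1)) (by positivity)).trans ?_
    rw [div_mul_eq_mul_div, div_le_iff₀ (by positivity)]
    nlinarith
  intro ε hε
  obtain ⟨r, hr, hfr⟩ := huc ε hε
  set D : Set (X × X) := {p | dist p.1 p.2 < r} with hD
  have hDm : MeasurableSet D := (isOpen_lt (by fun_prop) (by fun_prop)).measurableSet
  set k : X × X → ℝ := D.indicator 1 with hk
  have hkm : Measurable k := measurable_one.indicator hDm
  have hk0 : ∀ p, 0 ≤ k p := fun p => Set.indicator_nonneg (by simp) p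
  have hk1 : ∀ p, |k p| ≤ 1 := by
    intro p
    by_cases hp : p ∈ D <;> simp [hk, hp]
  have hball : ∀ (τ : Measure X) (x y : X), (∃ e : X ≃ᵢ X, e x = y ∧ MeasurePreserving e τ τ) →
      τ.real (ball x r) = τ.real (ball y r) := by
    rintro τ x y ⟨e, rfl, h⟩
    rw [measureReal_def, measureReal_def, ← h.measure_preimage (s := ball (e x) r) measurableSet_ball.nullMeasurableSet]
    simp
  have ha : ∀ x, ∫ y, k (x, y) ∂ν = ν.real (ball x0 r) := by
    intro x
    obtain ⟨e, h1, h2, h3⟩ := hinv x x0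
    rw [← hball ν x x0 ⟨e, h1, h3⟩, ← integral_indicator_one measurableSet_ball]
    refine integral_congr_ae (.of_forall fun y => ?_)
    simp [hk, hD, Set.indicator, dist_comm]
  have hb : ∀ y, ∫ x, k (x, y) ∂μ = μ.real (ball x0 r) := by
    intro x
    obtain ⟨e, h1, h2, h3⟩ := hinv x x0
    rw [← hball μ x x0 ⟨e, h1, h2⟩, ← integral_indicator_one measurableSet_ball]
    refine integral_congr_ae (.of_forall fun y => ?_)
    simp [hk, hD, Set.indicator]
  set a := ν.real (ball x0 r)
  set b := μ.real (ball x0 r)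
  have hapos : 0 < a := ENNReal.toReal_pos (measure_ball_pos ν x0 hr).ne' (measure_ne_top _ _)
  obtain ⟨i1, i2, e1, e2⟩ := inv_prop_aux μ ν k hkm hk1 a b ha hb f hf
  obtain ⟨j1, j2, g1, g2⟩ := inv_prop_aux μ ν k hkm hk1 a b ha hb (fun _ => 1) continuous_const
  simp only [one_mul] at j1 j2 g1 g2
  have hab : a * μ.real Set.univ = b * ν.real Set.univ := by
    have := g1.symm.trans g2
    simpa using this
  have hkint : ∫ p, k p ∂(μ.prod ν) = a * μ.real Set.univ := by simpa using g1
  have key : |a * ∫ x, f x ∂μ - b * ∫ x, f x ∂ν| ≤ ε * (a * μ.real Set.univ) := by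
    rw [← e1, ← e2, ← integral_sub i1 i2, ← hkint, ← integral_const_mul]
    refine (abs_integral_le_integral_abs).trans ?_
    refine integral_mono (i1.sub i2).abs (j1.const_mul ε) fun p => ?_
    simp only
    rw [← sub_mul, abs_mul, abs_of_nonneg (hk0 p)]
    by_cases hp : p ∈ D
    · have : dist (f p.1) (f p.2) < ε := hfr hp
      rw [Real.dist_eq] at this
      exact mul_le_mul_of_nonneg_right this.le (hk0 p)
    · simp [hk, hp]
  have hν0 : 0 ≤ ν.real Set.univ := by positivity
  have h2 := mul_le_mul_of_nonneg_left key hν0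
  rw [← abs_of_nonneg hν0, ← abs_mul, abs_of_nonneg hν0] at h2
  have h3 : ν.real Set.univ * (a * ∫ x, f x ∂μ - b * ∫ x, f x ∂ν)
      = a * (ν.real Set.univ * ∫ x, f x ∂μ - μ.real Set.univ * ∫ x, f x ∂ν) := by
    linear_combination (∫ x, f x ∂ν) * hab
  rw [h3, abs_mul, abs_of_pos hapos] at h2
  refine le_of_mul_le_mul_left (h2.trans (le_of_eq ?_)) hapos
  rw [hM]; ring

abbrev EE (n : ℕ) := EuclideanSpace ℝ (Fin n)

lemma sph_lower (k : ℕ) : 0 < μH[(k : ℝ)] (sphere (0 : EE (k+1)) 1) := by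
  let p : EE (k+1) → (Fin k → ℝ) := fun x j => x j.succ
  have hp : LipschitzWith 1 p := by
    refine LipschitzWith.of_dist_le_mul fun x y => ?_
    rw [NNReal.coe_one, one_mul, dist_pi_le_iff dist_nonneg]
    intro j
    rw [dist_eq_norm, dist_eq_norm]
    exact PiLp.norm_apply_le (x - y) j.succ
  have h := hp.hausdorffMeasure_image_le (d := (k : ℝ)) (by positivity) (sphere (0 : EE (k+1)) 1)
  simp only [ENNReal.coe_one, ENNReal.one_rpow, one_mul] at h
  refine lt_of_lt_of_le ?_ h
  have hv : (μH[(k : ℝ)] : Measure (Fin k → ℝ)) = volume := by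
    have := hausdorffMeasure_pi_real (ι := Fin k)
    simpa using this
  rw [hv]
  have hU : IsOpen {y : Fin k → ℝ | ∑ j, y j ^ 2 < 1} := isOpen_lt (by fun_prop) (by fun_prop)
  refine lt_of_lt_of_le (hU.measure_pos volume ⟨0, by simp⟩) (measure_mono ?_)
  intro y hy
  simp only [Set.mem_ofPred_eq] at hy
  refine ⟨WithLp.toLp 2 (Fin.cons (√(1 - ∑ j, y j ^ 2)) y), ?_, ?_⟩
  · rw [mem_sphere_zero_iff_norm, EuclideanSpace.norm_eq, Fin.sum_univ_succ]
    simp [Real.sq_sqrt (sub_nonneg.2 hy.le)]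
  · funext j
    simp [p]

lemma sph_upper (k : ℕ) : μH[(k : ℝ)] (sphere (0 : EE (k+1)) 1) < ⊤ := by
  let ins : Fin (k+1) → ℝ → (Fin k → ℝ) → EE (k+1) :=
    fun i ε y => WithLp.toLp 2 (i.insertNth ε y)
  let g : Fin (k+1) → ℝ → (Fin k → ℝ) → EE (k+1) := fun i ε y => ‖ins i ε y‖⁻¹ • ins i ε y
  have hins : ∀ i ε, ContDiff ℝ 1 (ins i ε) := by
    intro i ε
    rw [contDiff_euclidean]
    intro j
    refine i.succAboveCases ?_ ?_ j
    · simpa [ins] using contDiff_const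
    · intro l
      simp [ins]
      fun_prop
  have hne : ∀ i ε y, ε ≠ 0 → ins i ε y ≠ 0 := by
    intro i ε y h0 h
    have := congrArg (fun z : EE (k+1) => z i) h
    simp [ins] at this
    exact h0 this
  have hg : ∀ i ε, ε ≠ 0 → ContDiff ℝ 1 (g i ε) := by
    intro i ε h0
    refine ContDiff.smul (ContDiff.inv ((hins i ε).norm ℝ (fun y => hne i ε y h0)) ?_) (hins i ε)
    intro y
    exact norm_ne_zero_iff.2 (hne i ε y h0)
  have hfin : ∀ i ε, ε ≠ 0 → μH[(k : ℝ)] (g i ε '' closedBall 0 1) < ⊤ := by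
    intro i ε h0
    obtain ⟨K, hK⟩ := ((hg i ε h0).locallyLipschitz.locallyLipschitzOn (s := closedBall 0 1)).exists_lipschitzOnWith_of_compact (isCompact_closedBall 0 1)
    refine (hK.hausdorffMeasure_image_le (d := (k : ℝ)) (by positivity)).trans_lt ?_
    have hv : (μH[(k : ℝ)] : Measure (Fin k → ℝ)) = volume := by
      have := hausdorffMeasure_pi_real (ι := Fin k)
      simpa using this
    rw [hv]
    refine ENNReal.mul_lt_top ?_ (isCompact_closedBall 0 1).measure_lt_top
    simp [ENNReal.rpow_natCast]
  have hcov : sphere (0 : EE (k+1)) 1 ⊆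
      ⋃ i : Fin (k+1), (g i 1 '' closedBall 0 1 ∪ g i (-1) '' closedBall 0 1) := by
    intro x hx
    rw [mem_sphere_zero_iff_norm] at hx
    obtain ⟨i, -, hi⟩ := Finset.exists_max_image Finset.univ (fun i => |x i|) ⟨0, Finset.mem_univ _⟩
    have hxi : 0 < |x i| := by
      by_contra h
      have : x = 0 := by
        ext j
        have := hi j (Finset.mem_univ _)
        have h' : |x j| ≤ 0 := this.trans (not_lt.1 h)
        simpa using h'
      simp [this] at hx
    have hy : ∀ y : EE (k+1), (|x i|) • y = x → ‖y‖⁻¹ • y = x := by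
      intro y hy
      have hn : |x i| * ‖y‖ = 1 := by rw [← hx, ← hy, norm_smul]; simp [hy]
      have : ‖y‖⁻¹ = |x i| := inv_eq_of_mul_eq_one_left hn
      rw [this, hy]
    have hcb : (fun j => |x i|⁻¹ * x (i.succAbove j)) ∈ closedBall (0 : Fin k → ℝ) 1 := by
      rw [mem_closedBall_zero_iff, pi_norm_le_iff_of_nonneg zero_le_one]
      intro j
      rw [norm_mul, norm_inv, Real.norm_eq_abs, Real.norm_eq_abs, abs_abs, inv_mul_le_one₀ hxi]
      exact hi _ (Finset.mem_univ _)
    rw [Set.mem_iUnion]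
    refine ⟨i, ?_⟩
    rcases lt_or_gt_of_ne (abs_pos.1 hxi) with h | h
    · right
      refine ⟨_, hcb, hy _ ?_⟩
      ext j
      refine i.succAboveCases ?_ ?_ j
      · simp [ins, abs_of_neg h]
      · intro l
        simp [ins]
        field_simp
    · left
      refine ⟨_, hcb, hy _ ?_⟩
      ext j
      refine i.succAboveCases ?_ ?_ j
      · simp [ins, abs_of_pos h]
      · intro l
        simp [ins]
        field_simp
  refine (measure_mono hcov).trans_lt ((measure_iUnion_fintype_le _ _).trans_lt ?_)
  refine ENNReal.sum_lt_top.2 fun i _ => ?_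
  exact (measure_union_le _ _).trans_lt (ENNReal.add_lt_top.2 ⟨hfin i 1 (by norm_num), hfin i (-1) (by norm_num)⟩)

def sphIso {k : ℕ} (L : EE (k+1) ≃ₗᵢ[ℝ] EE (k+1)) :
    sphere (0 : EE (k+1)) 1 ≃ᵢ sphere (0 : EE (k+1)) 1 where
  toFun x := ⟨L x, by simp⟩
  invFun x := ⟨L.symm x, by simp⟩
  left_inv x := by ext1; simp
  right_inv x := by ext1; simp
  isometry_toFun := by
    intro x y
    simp [Subtype.edist_eq]

open Pointwise in
lemma sphIso_toSphere {k : ℕ} (L : EE (k+1) ≃ₗᵢ[ℝ] EE (k+1)) :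
    MeasurePreserving (sphIso L) (volume : Measure (EE (k+1))).toSphere
      (volume : Measure (EE (k+1))).toSphere := by
  refine ⟨(sphIso L).continuous.measurable, ?_⟩
  ext s hs
  rw [Measure.map_apply (sphIso L).continuous.measurable hs, Measure.toSphere_apply' _ hs,
    Measure.toSphere_apply' _ ((sphIso L).continuous.measurable hs)]
  congr 1
  rw [← L.measurePreserving.measure_preimage_emb L.toHomeomorph.measurableEmbedding
    (Set.Ioo (0 : ℝ) 1 • (Subtype.val '' s))]
  congr 1
  ext x
  simp only [Set.mem_smul, Set.mem_preimage, Set.mem_image]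
  constructor
  · rintro ⟨r, hr, _, ⟨w, hw, rfl⟩, rfl⟩
    exact ⟨r, hr, _, ⟨_, hw, rfl⟩, (map_smul L r (w : EE (k+1))).symm⟩
  · rintro ⟨r, hr, _, ⟨w, hw, rfl⟩, h⟩
    refine ⟨r, hr, _, ⟨(sphIso L).symm w, by simpa using hw, rfl⟩, ?_⟩
    apply L.injective
    rw [← h]
    simp [sphIso, IsometryEquiv.symm]

lemma sph_prop (k : ℕ) : ∃ K : ℝ, ∀ f : EE (k+1) → ℝ, Continuous f →
    ∫ w : sphere (0 : EE (k+1)) 1, f w ∂(volume : Measure (EE (k+1))).toSphere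
      = K * ∫ x in sphere (0 : EE (k+1)) 1, f x ∂μH[(k : ℝ)] := by
  have hmap := (isometry_subtype_coe (s := sphere (0 : EE (k+1)) 1)).map_hausdorffMeasure
    (d := (k : ℝ)) (Or.inl (by positivity))
  rw [Subtype.range_coe] at hmap
  set μ : Measure (sphere (0 : EE (k+1)) 1) := μH[(k : ℝ)] with hμ
  set ν := (volume : Measure (EE (k+1))).toSphere with hν
  have hme : MeasurableEmbedding ((↑) : sphere (0 : EE (k+1)) 1 → EE (k+1)) :=
    MeasurableEmbedding.subtype_coe isClosed_sphere.measurableSet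
  have huniv : μ Set.univ = μH[(k : ℝ)] (sphere (0 : EE (k+1)) 1) := by
    have := congrArg (fun m => m Set.univ) hmap
    simpa [hme.map_apply] using this
  have : IsFiniteMeasure μ := ⟨by rw [huniv]; exact sph_upper k⟩
  have hpos : 0 < μ.real Set.univ :=
    ENNReal.toReal_pos (by rw [huniv]; exact (sph_lower k).ne') (measure_ne_top _ _)
  refine ⟨ν.real Set.univ / μ.real Set.univ, fun f hf => ?_⟩
  have hinv : ∀ x y : sphere (0 : EE (k+1)) 1, ∃ e : sphere (0 : EE (k+1)) 1 ≃ᵢ _, e x = y ∧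
      MeasurePreserving e μ μ ∧ MeasurePreserving e ν ν := by
    intro x y
    refine ⟨sphIso (Submodule.reflection (ℝ ∙ ((x : EE (k+1)) - y))ᗮ), ?_,
      IsometryEquiv.measurePreserving_hausdorffMeasure _ _, sphIso_toSphere _⟩
    ext1
    exact Submodule.reflection_sub (by simp)
  have := inv_prop μ ν hinv (fun w => f w) (by fun_prop)
  rw [← hmap, hme.integral_map, div_mul_eq_mul_div, this]
  field_simp

open Pointwise in
lemma sph_prop_R (k : ℕ) : ∃ K : ℝ, ∀ f : EE (k+1) → ℝ, Continuous f → ∀ R : ℝ, 0 < R →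
    R ^ k * ∫ w : sphere (0 : EE (k+1)) 1, f (R • (w : EE (k+1)))
        ∂(volume : Measure (EE (k+1))).toSphere
      = K * ∫ x in sphere (0 : EE (k+1)) R, f x ∂μH[(k : ℝ)] := by
  obtain ⟨K, hK⟩ := sph_prop k
  refine ⟨K, fun f hf R hR => ?_⟩
  rw [hK (fun x => f (R • x)) (by fun_prop)]
  have hme : MeasurableEmbedding (fun x : EE (k+1) => R • x) :=
    (Homeomorph.smulOfNeZero R hR.ne').measurableEmbedding
  have hm : (μH[(k : ℝ)] : Measure (EE (k+1))).restrict (sphere (0 : EE (k+1)) R)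
      = ENNReal.ofReal (R ^ k) • (μH[(k : ℝ)].restrict (sphere (0 : EE (k+1)) 1)).map
          (fun x => R • x) := by
    ext s hs
    rw [Measure.smul_apply, hme.map_apply, Measure.restrict_apply hs,
      Measure.restrict_apply (hme.measurable hs)]
    have h := Measure.hausdorffMeasure_smul₀ (𝕜 := ℝ) (d := (k : ℝ)) (by positivity) hR.ne'
      ((fun x : EE (k+1) => R • x) ⁻¹' s ∩ sphere (0 : EE (k+1)) 1)
    have hs' : R • ((fun x : EE (k+1) => R • x) ⁻¹' s ∩ sphere (0 : EE (k+1)) 1)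
        = s ∩ sphere (0 : EE (k+1)) R := by
      ext x
      rw [Set.mem_smul_set_iff_inv_smul_mem₀ hR.ne']
      simp [smul_smul, hR.ne', norm_smul, abs_of_pos hR, inv_mul_eq_one₀ hR.ne', eq_comm]
    rw [hs'] at h
    rw [h, ENNReal.smul_def, smul_eq_mul, smul_eq_mul]
    congr 1
    rw [NNReal.rpow_natCast, ENNReal.ofReal, ENNReal.coe_inj]
    ext
    simp [abs_of_pos hR, hR.le]
  rw [hm, integral_smul_measure, hme.integral_map, ENNReal.toReal_ofReal (by positivity)]
  simp only [smul_eq_mul]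
  ring

lemma polar (k : ℕ) (F : EE (k+1) → ℝ) (hF : Integrable F) :
    ∫ x, F x = ∫ r in Set.Ioi (0 : ℝ), r ^ k * ∫ w : sphere (0 : EE (k+1)) 1, F (r • (w : EE (k+1)))
        ∂(volume : Measure (EE (k+1))).toSphere := by
  set ν := (volume : Measure (EE (k+1))).toSphere with hν
  have hdim : Module.finrank ℝ (EE (k+1)) - 1 = k := by simp
  have hmp := (volume : Measure (EE (k+1))).measurePreserving_homeomorphUnitSphereProd
  rw [hdim] at hmp
  set G : sphere (0 : EE (k+1)) 1 × Set.Ioi (0 : ℝ) → ℝ := fun p => F (p.2.1 • p.1.1) with hG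
  have hcomp : ∀ x : ({0}ᶜ : Set (EE (k+1))), G (homeomorphUnitSphereProd _ x) = F x := by
    rintro ⟨x, hx⟩
    simp only [hG]
    congr 1
    have : ‖x‖ ≠ 0 := norm_ne_zero_iff.2 hx
    simp [smul_smul, this]
  have h1 : ∫ x, F x = ∫ p, G p ∂(ν.prod (.volumeIoiPow k)) := by
    rw [← hmp.integral_comp (Homeomorph.measurableEmbedding _) G]
    simp only [hcomp]
    rw [integral_subtype_comap (measurableSet_singleton _).compl fun x ↦ F x,
        restrict_compl_singleton]
  have hGi : Integrable G (ν.prod (.volumeIoiPow k)) := by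
    rw [← hmp.integrable_comp_emb (Homeomorph.measurableEmbedding _)]
    have : G ∘ (homeomorphUnitSphereProd (EE (k+1))) = F ∘ Subtype.val := by
      funext x; exact hcomp x
    rw [this, ← integrableOn_iff_comap_subtypeVal (measurableSet_singleton _).compl]
    exact hF.integrableOn
  rw [h1, integral_prod_symm _ hGi]
  simp only [Measure.volumeIoiPow, ENNReal.ofReal]
  rw [integral_withDensity_eq_integral_smul]
  · simp only [hG]
    rw [integral_subtype_comap measurableSet_Ioi
      fun a ↦ Real.toNNReal (a ^ k) • ∫ w : sphere (0 : EE (k+1)) 1, F (a • (w : EE (k+1))) ∂ν]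
    refine setIntegral_congr_fun measurableSet_Ioi fun x hx => ?_
    rw [NNReal.smul_def, Real.coe_toNNReal _ (pow_nonneg hx.out.le _), smul_eq_mul]
  · exact (measurable_subtype_coe.pow_const _).real_toNNReal

lemma sph_cont (k : ℕ) (G : ℝ → EE (k+1) → ℝ) (hG : Continuous (Function.uncurry G)) :
    Continuous (fun r : ℝ => ∫ w : sphere (0 : EE (k+1)) 1, G r (w : EE (k+1))
      ∂(volume : Measure (EE (k+1))).toSphere) := by
  have := continuous_parametric_integral_of_continuous
    (μ := (volume : Measure (EE (k+1))).toSphere) (s := Set.univ)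
    (f := fun (r : ℝ) (w : sphere (0 : EE (k+1)) 1) => G r (w : EE (k+1)))
    (by
      have : Continuous (fun p : ℝ × sphere (0 : EE (k+1)) 1 => (p.1, (p.2 : EE (k+1)))) := by
        fun_prop
      exact hG.comp this) isCompact_univ
  simpa using this

/-- polar coordinates for a continuous function vanishing outside a ball -/
lemma polar_cs (k : ℕ) (F : EE (k+1) → ℝ) (hF : Continuous F) (L : ℝ) (hL : 0 < L)
    (h0 : ∀ x, L ≤ ‖x‖ → F x = 0) :
    ∫ x, F x = ∫ r in (0 : ℝ)..L, r ^ k * ∫ w : sphere (0 : EE (k+1)) 1, F (r • (w : EE (k+1)))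
        ∂(volume : Measure (EE (k+1))).toSphere := by
  have hcs : HasCompactSupport F := by
    refine HasCompactSupport.of_support_subset_isCompact (isCompact_closedBall 0 L) fun x hx => ?_
    rw [mem_closedBall_zero_iff]
    by_contra h
    exact hx (h0 x (not_le.1 h).le)
  rw [polar k F (hF.integrable_of_hasCompactSupport hcs), intervalIntegral.integral_of_le hL.le]
  refine setIntegral_eq_of_subset_of_forall_sdiff_eq_zero measurableSet_Ioi
    Set.Ioc_subset_Ioi_self fun r hr => ?_
  have hr1 : L ≤ r := by
    by_contra h
    exact hr.2 ⟨hr.1, (not_le.1 h).le⟩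
  have : ∀ w : sphere (0 : EE (k+1)) 1, F (r • (w : EE (k+1))) = 0 := by
    intro w
    apply h0
    simp only [norm_smul, norm_eq_of_mem_sphere, mul_one]
    exact hr1.trans (le_abs_self r)
  simp [this]

lemma polar_ball (k : ℕ) (F : EE (k+1) → ℝ) (hF : Continuous F) (L : ℝ) (hL : 0 < L) :
    ∫ x in ball 0 L, F x = ∫ r in (0 : ℝ)..L, r ^ k * ∫ w : sphere (0 : EE (k+1)) 1,
      F (r • (w : EE (k+1))) ∂(volume : Measure (EE (k+1))).toSphere := by
  have hint : IntegrableOn F (ball 0 L) :=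
    (hF.continuousOn.integrableOn_compact (isCompact_closedBall 0 L)).mono_set ball_subset_closedBall
  rw [← integral_indicator measurableSet_ball,
    polar k _ ((integrable_indicator_iff measurableSet_ball).2 hint),
    intervalIntegral.integral_of_le hL.le, integral_Ioc_eq_integral_Ioo]
  have e1 : ∫ r in Set.Ioo 0 L, r ^ k * ∫ w : sphere (0 : EE (k+1)) 1,
      F (r • (w : EE (k+1))) ∂(volume : Measure (EE (k+1))).toSphere
      = ∫ r in Set.Ioo 0 L, r ^ k * ∫ w : sphere (0 : EE (k+1)) 1,
      (ball 0 L).indicator F (r • (w : EE (k+1))) ∂(volume : Measure (EE (k+1))).toSphere := by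
    refine setIntegral_congr_fun measurableSet_Ioo fun r hr => ?_
    congr 2
    funext w
    rw [Set.indicator_of_mem]
    rw [mem_ball_zero_iff, norm_smul, norm_eq_of_mem_sphere, mul_one, Real.norm_eq_abs,
      abs_of_pos hr.1]
    exact hr.2
  rw [e1]
  refine setIntegral_eq_of_subset_of_forall_sdiff_eq_zero measurableSet_Ioi
    Set.Ioo_subset_Ioi_self fun r hr => ?_
  have hr1 : L ≤ r := by
    by_contra h
    exact hr.2 ⟨hr.1, (not_le.1 h)⟩
  have : ∀ w : sphere (0 : EE (k+1)) 1, (ball 0 L).indicator F (r • (w : EE (k+1))) = 0 := by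
    intro w
    apply Set.indicator_of_notMem
    rw [mem_ball_zero_iff, norm_smul, norm_eq_of_mem_sphere, mul_one, not_lt]
    exact hr1.trans (le_abs_self r)
  simp [this]

/-- weak form of the divergence theorem with radial cutoff -/
lemma div_weak (k : ℕ) (f : Fin (k+1) → EE (k+1) → ℝ) (hf : ∀ j, ContDiff ℝ 1 (f j))
    (ψ ψ' : ℝ → ℝ) (hψ : ∀ s, HasDerivAt ψ (ψ' s) s) (hψ' : Continuous ψ') (L : ℝ) (hL : 0 < L)
    (h0 : ∀ s, L ^ 2 ≤ s → ψ s = 0) (h0' : ∀ s, L ^ 2 ≤ s → ψ' s = 0) :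
    ∫ x, ψ (‖x‖ ^ 2) * ∑ j, fderiv ℝ (f j) x (EuclideanSpace.single j 1)
      = - ∫ x, 2 * ψ' (‖x‖ ^ 2) * ∑ j, f j x * x j := by
  have hψc : Continuous ψ := continuous_iff_continuousAt.2 fun s => (hψ s).continuousAt
  have hcs : ∀ F : EE (k+1) → ℝ, (∀ x, L ^ 2 ≤ ‖x‖ ^ 2 → F x = 0) → HasCompactSupport F := by
    intro F h
    refine HasCompactSupport.of_support_subset_isCompact (isCompact_closedBall 0 L) fun x hx => ?_
    rw [mem_closedBall_zero_iff]
    by_contra h'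
    exact hx (h x (by have := (not_le.1 h').le; gcongr))
  have hd : ∀ x : EE (k+1), HasFDerivAt (fun x : EE (k+1) => ψ (‖x‖ ^ 2))
      (ψ' (‖x‖ ^ 2) • (2 • (innerSL ℝ x))) x := by
    intro x
    have h1 := (hasStrictFDerivAt_norm_sq x).hasFDerivAt
    exact (hψ (‖x‖ ^ 2)).comp_hasFDerivAt x h1
  have hfd : ∀ (x : EE (k+1)) j, fderiv ℝ (fun x : EE (k+1) => ψ (‖x‖ ^ 2)) x
      (EuclideanSpace.single j 1) = 2 * ψ' (‖x‖ ^ 2) * x j := by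
    intro x j
    rw [(hd x).fderiv]
    simp [EuclideanSpace.inner_single_right]
    ring
  have hcf : ∀ j, Continuous fun x => fderiv ℝ (f j) x (EuclideanSpace.single j 1) := fun j =>
    ((hf j).continuous_fderiv (by norm_num)).clm_apply continuous_const
  have hc : ∀ j, Continuous (f j) := fun j => (hf j).continuous
  have ia : ∀ j, Integrable (fun x : EE (k+1) => ψ (‖x‖ ^ 2) * fderiv ℝ (f j) x (EuclideanSpace.single j 1)) := by
    intro j
    have := hcf j
    refine Continuous.integrable_of_hasCompactSupport (by fun_prop) (hcs _ fun x hx => ?_)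
    simp [h0 _ hx]
  have ib : ∀ j, Integrable (fun x : EE (k+1) => 2 * ψ' (‖x‖ ^ 2) * x j * f j x) := by
    intro j
    have := hc j
    refine Continuous.integrable_of_hasCompactSupport (by fun_prop) (hcs _ fun x hx => ?_)
    simp [h0' _ hx]
  have ic : ∀ j, Integrable (fun x : EE (k+1) => ψ (‖x‖ ^ 2) * f j x) := by
    intro j
    have := hc j
    refine Continuous.integrable_of_hasCompactSupport (by fun_prop) (hcs _ fun x hx => ?_)
    simp [h0 _ hx]
  have hj : ∀ j, ∫ x : EE (k+1), ψ (‖x‖ ^ 2) * fderiv ℝ (f j) x (EuclideanSpace.single j 1)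
      = - ∫ x : EE (k+1), 2 * ψ' (‖x‖ ^ 2) * x j * f j x := by
    intro j
    have := integral_mul_fderiv_eq_neg_fderiv_mul_of_integrable (μ := (volume : Measure (EE (k+1))))
      (f := fun x : EE (k+1) => ψ (‖x‖ ^ 2)) (g := f j) (v := EuclideanSpace.single j 1)
      (by simp only [hfd]; exact ib j) (ia j) (ic j)
      (fun x _ => (hd x).differentiableAt) (fun x _ => (hf j).differentiable (by norm_num) x)
    simpa only [hfd] using this
  simp only [Finset.mul_sum]
  rw [integral_finsetSum _ (fun j _ => ia j), integral_finsetSum, ← Finset.sum_neg_distrib]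
  · refine Finset.sum_congr rfl fun j _ => ?_
    rw [hj]
    congr 2
    funext x
    ring
  · intro j _
    refine (ib j).congr (.of_forall fun x => ?_)
    simp only
    ring

lemma div_polar (k : ℕ) (f : Fin (k+1) → EE (k+1) → ℝ) (hf : ∀ j, ContDiff ℝ 1 (f j))
    (R : ℝ) (hR : 0 < R) :
    ∫ x in ball 0 R, ∑ j, fderiv ℝ (f j) x (EuclideanSpace.single j 1)
      = R ^ k * ∫ w : sphere (0 : EE (k+1)) 1, ∑ j, f j (R • (w : EE (k+1))) * (w : EE (k+1)) j
        ∂(volume : Measure (EE (k+1))).toSphere := by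
  set ν := (volume : Measure (EE (k+1))).toSphere with hν
  set g : EE (k+1) → ℝ := fun x => ∑ j, fderiv ℝ (f j) x (EuclideanSpace.single j 1) with hg
  have hgc : Continuous g := continuous_finsetSum _ fun j _ =>
    ((hf j).continuous_fderiv (by norm_num)).clm_apply continuous_const
  have hc : ∀ j, Continuous (f j) := fun j => (hf j).continuous
  set A : ℝ → ℝ := fun r => r ^ k * ∫ w : sphere (0 : EE (k+1)) 1,
    ∑ j, f j (r • (w : EE (k+1))) * (w : EE (k+1)) j ∂ν with hA
  set B : ℝ → ℝ := fun r => r ^ k * ∫ w : sphere (0 : EE (k+1)) 1, g (r • (w : EE (k+1))) ∂ν with hB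
  have hAc : Continuous A := (continuous_pow k).mul
    (sph_cont k (fun r w => ∑ j, f j (r • w) * w j) (by unfold Function.uncurry; fun_prop))
  have hBc : Continuous B := (continuous_pow k).mul
    (sph_cont k (fun r w => g (r • w)) (by unfold Function.uncurry; fun_prop))
  set V : ℝ → ℝ := fun r => ∫ s in (0 : ℝ)..r, B s with hV
  have hVd : ∀ r, HasDerivAt V (B r) r := fun r =>
    intervalIntegral.integral_hasDerivAt_right (hBc.intervalIntegrable _ _)
      hBc.stronglyMeasurable.stronglyMeasurableAtFilter hBc.continuousAt
  have hVc : Continuous V := continuous_iff_continuousAt.2 fun s => (hVd s).continuousAt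
  rw [polar_ball k g hgc R hR]
  change V R = A R
  set L := R + 1 with hLd
  have hL : 0 < L := by positivity
  set ψ' : ℝ → ℝ := fun s => (A √s - V √s) * max (L ^ 2 - s) 0 with hψ'
  have hψ'c : Continuous ψ' := by fun_prop
  set ψ : ℝ → ℝ := fun s => ∫ t in (L ^ 2)..s, ψ' t with hψ
  have hψd : ∀ s, HasDerivAt ψ (ψ' s) s := fun s =>
    intervalIntegral.integral_hasDerivAt_right (hψ'c.intervalIntegrable _ _)
      hψ'c.stronglyMeasurable.stronglyMeasurableAtFilter hψ'c.continuousAt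
  have hψc : Continuous ψ := continuous_iff_continuousAt.2 fun s => (hψd s).continuousAt
  have h0' : ∀ s, L ^ 2 ≤ s → ψ' s = 0 := by
    intro s hs
    simp [hψ', max_eq_right (sub_nonpos.2 hs)]
  have h0 : ∀ s, L ^ 2 ≤ s → ψ s = 0 := by
    intro s hs
    simp only [hψ]
    rw [intervalIntegral.integral_congr (g := fun _ => 0), intervalIntegral.integral_zero]
    intro t ht
    rw [Set.uIcc_of_le hs] at ht
    exact h0' t ht.1
  have hw := div_weak k f hf ψ ψ' hψd hψ'c L hL h0 h0'
  rw [polar_cs k _ (by fun_prop) L hL, polar_cs k _ (by fun_prop) L hL] at hw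
  rotate_left
  · intro x hx
    rw [h0' _ (by gcongr)]; simp
  · intro x hx
    rw [h0 _ (by gcongr)]; simp
  have hnorm : ∀ (r : ℝ) (w : sphere (0 : EE (k+1)) 1), ‖r • (w : EE (k+1))‖ ^ 2 = r ^ 2 := by
    intro r w
    simp [norm_smul]
  have e1 : ∀ r : ℝ, r ^ k * ∫ w : sphere (0 : EE (k+1)) 1, ψ (‖r • (w : EE (k+1))‖ ^ 2) *
      g (r • (w : EE (k+1))) ∂ν = ψ (r ^ 2) * B r := by
    intro r
    simp only [hnorm, integral_const_mul, hB]
    ring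
  have e2 : ∀ r : ℝ, r ^ k * ∫ w : sphere (0 : EE (k+1)) 1, 2 * ψ' (‖r • (w : EE (k+1))‖ ^ 2) *
      ∑ j, f j (r • (w : EE (k+1))) * (r • (w : EE (k+1))) j ∂ν = ψ' (r ^ 2) * (2 * r) * A r := by
    intro r
    simp only [hnorm, hA]
    rw [integral_const_mul]
    have : ∀ w : sphere (0 : EE (k+1)) 1, ∑ j, f j (r • (w : EE (k+1))) * (r • (w : EE (k+1))) j
        = r * ∑ j, f j (r • (w : EE (k+1))) * (w : EE (k+1)) j := by
      intro w
      rw [Finset.mul_sum]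
      refine Finset.sum_congr rfl fun j _ => ?_
      simp; ring
    simp only [this, integral_const_mul]
    ring
  simp only [hg] at e1
  simp only [← hν, e1, e2] at hw
  have hχ : ∀ r : ℝ, HasDerivAt (fun r => ψ (r ^ 2)) (ψ' (r ^ 2) * (2 * r)) r := by
    intro r
    have h1 : HasDerivAt (fun r : ℝ => r ^ 2) (2 * r) r := by simpa using hasDerivAt_pow 2 r
    exact (hψd (r ^ 2)).comp r h1
  have hparts := intervalIntegral.integral_mul_deriv_eq_deriv_mul (a := 0) (b := L)
    (u := fun r => ψ (r ^ 2)) (v := V) (u' := fun r => ψ' (r ^ 2) * (2 * r)) (v' := B)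
    (fun r _ => hχ r) (fun r _ => hVd r)
    (Continuous.intervalIntegrable (by fun_prop) _ _) (hBc.intervalIntegrable _ _)
  have hV0 : V 0 = 0 := by simp [hV]
  rw [hw, h0 (L ^ 2) le_rfl, hV0] at hparts
  have hz : ∫ r in (0 : ℝ)..L, ψ' (r ^ 2) * (2 * r) * (A r - V r) = 0 := by
    simp only [mul_sub]
    rw [intervalIntegral.integral_sub (Continuous.intervalIntegrable (by fun_prop) _ _)
      (Continuous.intervalIntegrable (by fun_prop) _ _)]
    linarith
  by_contra hne
  have hpos : 0 < ∫ r in (0 : ℝ)..L, ψ' (r ^ 2) * (2 * r) * (A r - V r) := by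
    have hsq : ∀ r, 0 ≤ r → ψ' (r ^ 2) * (2 * r) * (A r - V r)
        = (A r - V r) ^ 2 * (max (L ^ 2 - r ^ 2) 0 * (2 * r)) := by
      intro r hr
      simp only [hψ', Real.sqrt_sq hr]
      ring
    refine intervalIntegral.integral_pos hL (Continuous.continuousOn (by fun_prop)) ?_ ⟨R, ⟨hR.le, by linarith⟩, ?_⟩
    · intro r hr
      rw [hsq r hr.1.le]
      have := hr.1
      positivity
    · rw [hsq R hR.le]
      have h1 : A R - V R ≠ 0 := sub_ne_zero.2 (Ne.symm hne)
      have h2 : 0 < L ^ 2 - R ^ 2 := by rw [hLd]; nlinarith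
      have h3 : 0 < max (L ^ 2 - R ^ 2) 0 := lt_max_of_lt_left h2
      positivity
  exact hpos.ne' hz

lemma div_thm (k : ℕ) : ∃ K : ℝ, ∀ f : Fin (k+1) → EE (k+1) → ℝ, (∀ j, ContDiff ℝ 1 (f j)) →
    ∀ R : ℝ, 0 < R →
    ∫ x in ball 0 R, ∑ j, fderiv ℝ (f j) x (EuclideanSpace.single j 1)
      = K * ∫ x in sphere (0 : EE (k+1)) R, ∑ j, f j x * (‖x‖⁻¹ * x j) ∂μH[(k : ℝ)] := by
  obtain ⟨K, hK⟩ := sph_prop_R k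
  refine ⟨K, fun f hf R hR => ?_⟩
  have hc : ∀ j, Continuous (f j) := fun j => (hf j).continuous
  rw [div_polar k f hf R hR]
  have h := hK (fun x => ∑ j, f j x * (R⁻¹ * x j)) (by fun_prop) R hR
  have e1 : ∫ x in sphere (0 : EE (k+1)) R, ∑ j, f j x * (‖x‖⁻¹ * x j) ∂μH[(k : ℝ)]
      = ∫ x in sphere (0 : EE (k+1)) R, ∑ j, f j x * (R⁻¹ * x j) ∂μH[(k : ℝ)] := by
    refine setIntegral_congr_fun isClosed_sphere.measurableSet fun x hx => ?_
    rw [mem_sphere_zero_iff_norm] at hx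
    simp only [hx]
  rw [e1, ← h]
  congr 2
  funext w
  refine Finset.sum_congr rfl fun j _ => ?_
  simp [hR.ne']

lemma div_thm' (n : ℕ) : ∃ K : ℝ, ∀ f : Fin n → EE n → ℝ, (∀ j, ContDiff ℝ 1 (f j)) →
    ∀ R : ℝ, 0 < R →
    ∫ x in ball 0 R, ∑ j, fderiv ℝ (f j) x (EuclideanSpace.single j 1)
      = K * ∫ x in sphere (0 : EE n) R, ∑ j, f j x * (‖x‖⁻¹ * x j) ∂μH[(n : ℝ) - 1] := by
  cases n with
  | zero => exact ⟨0, fun f hf R hR => by simp⟩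
  | succ k =>
    have : (((k + 1 : ℕ) : ℝ) - 1) = k := by push_cast; ring
    rw [this]
    exact div_thm k

def embL (n : ℕ) : (EE n × ℝ) →L[ℝ] EE (n + 1) :=
  LinearMap.toContinuousLinearMap
    { toFun := fun p => emb p.1 p.2
      map_add' := by
        intro p q
        ext l
        refine Fin.lastCases ?_ (fun j => ?_) l <;> simp [emb]
      map_smul' := by
        intro c p
        ext l
        refine Fin.lastCases ?_ (fun j => ?_) l <;> simp [emb] }

lemma embL_apply {n : ℕ} (x : EE n) (t : ℝ) : embL n (x, t) = emb x t := rfl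

lemma embL_last (n : ℕ) : embL n (0, 1) = EuclideanSpace.single (Fin.last n) 1 := by
  rw [embL_apply]
  ext l
  refine Fin.lastCases ?_ (fun j => ?_) l <;> simp [emb, Fin.castSucc_ne_last]

lemma embL_single {n : ℕ} (j : Fin n) :
    embL n (EuclideanSpace.single j 1, 0) = EuclideanSpace.single j.castSucc 1 := by
  rw [embL_apply]
  ext l
  refine Fin.lastCases ?_ (fun j' => ?_) l
  · simp [emb, (Fin.castSucc_ne_last j).symm]
  · simp [emb]

lemma hasDerivAt_emb {n : ℕ} (w : EE (n+1) → ℝ) (x : EE n) (t : ℝ)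
    (hw : DifferentiableAt ℝ w (emb x t)) :
    HasDerivAt (fun s => w (emb x s)) (fderiv ℝ w (emb x t) (EuclideanSpace.single (Fin.last n) 1)) t := by
  have h1 : HasDerivAt (fun s : ℝ => ((x, s) : EE n × ℝ)) (0, 1) t :=
    (hasDerivAt_const t x).prodMk (hasDerivAt_id t)
  have h2 : HasDerivAt (fun s : ℝ => emb x s) (EuclideanSpace.single (Fin.last n) 1) t := by
    rw [← embL_last]
    exact (embL n).hasFDerivAt.comp_hasDerivAt t h1
  exact hw.hasFDerivAt.comp_hasDerivAt t h2

lemma fderiv_emb {n : ℕ} (w : EE (n+1) → ℝ) (x : EE n) (t : ℝ) (j : Fin n)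
    (hw : DifferentiableAt ℝ w (emb x t)) :
    fderiv ℝ (fun y => w (emb y t)) x (EuclideanSpace.single j 1)
      = fderiv ℝ w (emb x t) (EuclideanSpace.single j.castSucc 1) := by
  have h1 : HasFDerivAt (fun y : EE n => ((y, t) : EE n × ℝ))
      ((ContinuousLinearMap.id ℝ (EE n)).prod 0) x :=
    (hasFDerivAt_id x).prodMk (hasFDerivAt_const t x)
  have h2 : HasFDerivAt (fun y : EE n => emb y t) _ x := (embL n).hasFDerivAt.comp x h1
  have h3 : HasFDerivAt (fun y : EE n => w (emb y t)) _ x := hw.hasFDerivAt.comp x h2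
  rw [h3.fderiv, ← embL_single]
  simp

lemma contDiff_emb {n : ℕ} (w : EE (n+1) → ℝ) (t : ℝ) (hw : ContDiff ℝ 1 w) :
    ContDiff ℝ 1 (fun y : EE n => w (emb y t)) := by
  have : ContDiff ℝ 1 (fun y : EE n => embL n (y, t)) := by fun_prop
  exact hw.comp this

lemma grad_apply {N : ℕ} (v : EE N → ℝ) (x : EE N) (l : Fin N) :
    gradient v x l = fderiv ℝ v x (EuclideanSpace.single l 1) := by
  have : ⟪gradient v x, EuclideanSpace.single l 1⟫ = fderiv ℝ v x (EuclideanSpace.single l 1) := by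
    simp [gradient]
  rw [← this, EuclideanSpace.inner_single_right]
  simp

lemma grad_normsq {N : ℕ} (v : EE N → ℝ) (x : EE N) :
    ‖gradient v x‖ ^ 2 = ∑ l, (fderiv ℝ v x (EuclideanSpace.single l 1)) ^ 2 := by
  rw [EuclideanSpace.norm_sq_eq]
  simp [grad_apply]

lemma contDiff_part {N : ℕ} (v : EE N → ℝ) (hv : ContDiff ℝ 2 v) (e : EE N) :
    ContDiff ℝ 1 (fun x => fderiv ℝ v x e) :=
  (hv.fderiv_right (m := 1) (by norm_num)).clm_apply contDiff_const

lemma contDiff_normsq {N : ℕ} (v : EE N → ℝ) (hv : ContDiff ℝ 2 v) :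
    ContDiff ℝ 1 (fun x => ‖gradient v x‖ ^ 2) := by
  simp only [grad_normsq]
  exact ContDiff.sum fun l _ => (contDiff_part v hv _).pow 2

lemma contDiff_derivΦ (Φ : ℝ → ℝ) (hΦ : ContDiff ℝ 2 Φ) : ContDiff ℝ 1 (deriv Φ) := by
  have : ContDiff ℝ (1 + 1) Φ := by simpa [one_add_one_eq_two] using hΦ
  exact (contDiff_succ_iff_deriv.1 this).2.2

lemma contDiff_a {N : ℕ} (Φ : ℝ → ℝ) (hΦ : ContDiff ℝ 2 Φ) (v : EE N → ℝ) (hv : ContDiff ℝ 2 v) :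
    ContDiff ℝ 1 (fun x => deriv Φ (‖gradient v x‖ ^ 2)) :=
  (contDiff_derivΦ Φ hΦ).comp (contDiff_normsq v hv)

lemma pde_id {N : ℕ} (Φ : ℝ → ℝ) (hΦ : ContDiff ℝ 2 Φ) (v : EE N → ℝ) (hv : ContDiff ℝ 2 v)
    (l₀ : Fin N) (x : EE N) :
    fderiv ℝ (fun y => (1 : ℝ) / 2 * Φ (‖gradient v y‖ ^ 2) - deriv Φ (‖gradient v y‖ ^ 2)
        * (fderiv ℝ v y (EuclideanSpace.single l₀ 1)) ^ 2) x (EuclideanSpace.single l₀ 1)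
      + vdiv (fun y => deriv Φ (‖gradient v y‖ ^ 2) • gradient v y) x
          * fderiv ℝ v x (EuclideanSpace.single l₀ 1)
    = ∑ l, fderiv ℝ (fun y => deriv Φ (‖gradient v y‖ ^ 2)
          * fderiv ℝ v y (EuclideanSpace.single l 1)
          * fderiv ℝ v y (EuclideanSpace.single l₀ 1)) x (EuclideanSpace.single l 1)
      - fderiv ℝ (fun y => deriv Φ (‖gradient v y‖ ^ 2)
          * fderiv ℝ v y (EuclideanSpace.single l₀ 1)
          * fderiv ℝ v y (EuclideanSpace.single l₀ 1)) x (EuclideanSpace.single l₀ 1) := by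
  set a : EE N → ℝ := fun y => deriv Φ (‖gradient v y‖ ^ 2) with ha
  set p : Fin N → EE N → ℝ := fun l y => fderiv ℝ v y (EuclideanSpace.single l 1) with hp
  have hac : ContDiff ℝ 1 a := contDiff_a Φ hΦ v hv
  have hpc : ∀ l, ContDiff ℝ 1 (p l) := fun l => contDiff_part v hv _
  have had : HasFDerivAt a (fderiv ℝ a x) x := (hac.differentiable (by norm_num) x).hasFDerivAt
  have hpd : ∀ l, HasFDerivAt (p l) (fderiv ℝ (p l) x) x := fun l =>
    ((hpc l).differentiable (by norm_num) x).hasFDerivAt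
  have hsym : ∀ l m, fderiv ℝ (p l) x (EuclideanSpace.single m 1)
      = fderiv ℝ (p m) x (EuclideanSpace.single l 1) := by
    intro l m
    have hd : DifferentiableAt ℝ (fderiv ℝ v) x :=
      (hv.fderiv_right (m := 1) (by norm_num)).differentiable (by norm_num) x
    have h1 : ∀ e : EE N, fderiv ℝ (fun y => fderiv ℝ v y e) x = (fderiv ℝ (fderiv ℝ v) x).flip e := by
      intro e
      ext z
      rw [fderiv_clm_apply hd (differentiableAt_const e)]
      simp
    simp only [hp, h1, ContinuousLinearMap.flip_apply]
    exact (hv.contDiffAt.isSymmSndFDerivAt (by simp)) _ _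
  have hq : HasFDerivAt (fun y => ‖gradient v y‖ ^ 2) (∑ l, (2 * p l x) • fderiv ℝ (p l) x) x := by
    simp only [grad_normsq]
    refine HasFDerivAt.fun_sum fun l _ => ?_
    simpa using (hpd l).pow 2
  have hΦd : HasFDerivAt (fun y => Φ (‖gradient v y‖ ^ 2))
      (a x • ∑ l, (2 * p l x) • fderiv ℝ (p l) x) x :=
    ((hΦ.differentiable (by norm_num) _).hasDerivAt).comp_hasFDerivAt x hq
  have h1 : fderiv ℝ (fun y => (1 : ℝ) / 2 * Φ (‖gradient v y‖ ^ 2) - a y * (p l₀ y) ^ 2) x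
      (EuclideanSpace.single l₀ 1)
      = ∑ l, a x * p l x * fderiv ℝ (p l₀) x (EuclideanSpace.single l 1)
        - (a x * (2 * p l₀ x * fderiv ℝ (p l₀) x (EuclideanSpace.single l₀ 1))
          + p l₀ x ^ 2 * fderiv ℝ a x (EuclideanSpace.single l₀ 1)) := by
    have h : HasFDerivAt (fun y => (1 : ℝ) / 2 * Φ (‖gradient v y‖ ^ 2) - a y * (p l₀ y) ^ 2) _ x :=
      (hΦd.const_mul (1 / 2)).sub (had.mul ((hpd l₀).pow 2))
    rw [h.fderiv]
    simp only [_root_.add_apply, _root_.sub_apply, _root_.smul_apply, smul_eq_mul,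
      _root_.sum_apply, Finset.mul_sum]
    congr 1
    · refine Finset.sum_congr rfl fun l _ => ?_
      rw [hsym l l₀]; ring
    · simp
  have h4 : ∀ l, fderiv ℝ (fun y => a y * p l y) x (EuclideanSpace.single l 1)
      = a x * fderiv ℝ (p l) x (EuclideanSpace.single l 1)
        + p l x * fderiv ℝ a x (EuclideanSpace.single l 1) := by
    intro l
    have h : HasFDerivAt (fun y => a y * p l y) _ x := had.mul (hpd l)
    rw [h.fderiv]
    simp
  have h2 : ∀ l, fderiv ℝ (fun y => a y * p l y * p l₀ y) x (EuclideanSpace.single l 1)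
      = a x * p l x * fderiv ℝ (p l₀) x (EuclideanSpace.single l 1)
        + p l₀ x * fderiv ℝ (fun y => a y * p l y) x (EuclideanSpace.single l 1) := by
    intro l
    have h0 : HasFDerivAt (fun y => a y * p l y) _ x := had.mul (hpd l)
    have h : HasFDerivAt (fun y => a y * p l y * p l₀ y) _ x :=
      h0.differentiableAt.hasFDerivAt.mul (hpd l₀)
    rw [h.fderiv]
    simp
  have h3 : vdiv (fun y => a y • gradient v y) x
      = ∑ l, fderiv ℝ (fun y => a y * p l y) x (EuclideanSpace.single l 1) := by
    unfold vdiv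
    refine Finset.sum_congr rfl fun l _ => ?_
    have hgd : DifferentiableAt ℝ (fun y => a y • gradient v y) x := by
      rw [differentiableAt_euclidean]
      intro m
      simp only [PiLp.smul_apply, smul_eq_mul, grad_apply]
      exact (had.mul (hpd m)).differentiableAt
    have := (EuclideanSpace.proj (𝕜 := ℝ) l).hasFDerivAt.comp x hgd.hasFDerivAt
    have h' : ((EuclideanSpace.proj (𝕜 := ℝ) l : EE N →L[ℝ] ℝ) : EE N → ℝ) ∘
        (fun y => a y • gradient v y) = fun y => a y * p l y := by
      funext y
      simp [grad_apply, hp]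
    rw [h'] at this
    rw [this.fderiv]
    simp
  rw [h3, h1]
  change _ = ∑ l, fderiv ℝ (fun y => a y * p l y * p l₀ y) x (EuclideanSpace.single l 1)
    - fderiv ℝ (fun y => a y * p l₀ y * p l₀ y) x (EuclideanSpace.single l₀ 1)
  change _ + _ * p l₀ x = _
  simp only [h2]
  rw [Finset.sum_add_distrib, ← Finset.mul_sum, h4 l₀]
  ring

/-- flux components -/
def flux {n m : ℕ} (Φ : ℝ → ℝ) (u : Fin m → EE (n+1) → ℝ) (i : Fin m) (l : Fin (n+1))
    (y : EE (n+1)) : ℝ :=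
  deriv Φ (‖gradient (u i) y‖ ^ 2) * fderiv ℝ (u i) y (EuclideanSpace.single l 1)
    * fderiv ℝ (u i) y (EuclideanSpace.single (Fin.last n) 1)

lemma flux_contDiff {n m : ℕ} (Φ : ℝ → ℝ) (hΦ : ContDiff ℝ 2 Φ) (u : Fin m → EE (n+1) → ℝ)
    (hu : ∀ i, ContDiff ℝ 2 (u i)) (i : Fin m) (l : Fin (n+1)) : ContDiff ℝ 1 (flux Φ u i l) :=
  ((contDiff_a Φ hΦ (u i) (hu i)).mul (contDiff_part _ (hu i) _)).mul (contDiff_part _ (hu i) _)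

lemma ham_deriv {n m : ℕ}
    (Φ : ℝ → ℝ) (hΦ : ContDiff ℝ 2 Φ)
    (H : Fin m → (Fin m → ℝ) → ℝ)
    (Ht : (Fin m → ℝ) → ℝ) (hHt : ContDiff ℝ 2 Ht)
    (hHtgrad : ∀ i y, fderiv ℝ Ht y (Pi.single i 1) = H i y)
    (u : Fin m → EuclideanSpace ℝ (Fin (n + 1)) → ℝ)
    (hu : ∀ i, ContDiff ℝ 2 (u i))
    (hsol : ∀ i x, -vdiv (fun y => deriv Φ (‖gradient (u i) y‖ ^ 2) • gradient (u i) y) x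
        = H i (fun j => u j x)) (x : EE n) (t : ℝ) :
    deriv (fun s => hamIntegrand Φ Ht u x s) t
      = ∑ i, ∑ j : Fin n, fderiv ℝ (flux Φ u i j.castSucc) (emb x t)
          (EuclideanSpace.single j.castSucc 1) := by
  set w : Fin m → EE (n+1) → ℝ := fun i y => (1 : ℝ) / 2 * Φ (‖gradient (u i) y‖ ^ 2)
      - deriv Φ (‖gradient (u i) y‖ ^ 2)
        * (fderiv ℝ (u i) y (EuclideanSpace.single (Fin.last n) 1)) ^ 2 with hw
  have hwc : ∀ i, ContDiff ℝ 1 (w i) := fun i =>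
    (contDiff_const.mul ((hΦ.of_le (by norm_num)).comp (contDiff_normsq _ (hu i)))).sub
      ((contDiff_a Φ hΦ (u i) (hu i)).mul ((contDiff_part _ (hu i) _).pow 2))
  have h1 : ∀ i, HasDerivAt (fun s => w i (emb x s)) _ t := fun i =>
    hasDerivAt_emb (w i) x t ((hwc i).differentiable (by norm_num) _)
  have h2 : ∀ i, HasDerivAt (fun s => u i (emb x s)) _ t := fun i =>
    hasDerivAt_emb (u i) x t ((hu i).differentiable (by norm_num) _)
  have h3 : HasDerivAt (fun s => Ht (fun i => u i (emb x s)))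
      (fderiv ℝ Ht (fun i => u i (emb x t)) (fun i => fderiv ℝ (u i) (emb x t)
        (EuclideanSpace.single (Fin.last n) 1))) t :=
    ((hHt.differentiable (by norm_num) _).hasFDerivAt).comp_hasDerivAt t (hasDerivAt_pi.2 h2)
  have h4 : fderiv ℝ Ht (fun i => u i (emb x t)) (fun i => fderiv ℝ (u i) (emb x t)
        (EuclideanSpace.single (Fin.last n) 1))
      = ∑ i, H i (fun j => u j (emb x t)) * fderiv ℝ (u i) (emb x t)
        (EuclideanSpace.single (Fin.last n) 1) := by
    refine (LinearMap.pi_apply_eq_sum_univ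
      (fderiv ℝ Ht (fun i => u i (emb x t))).toLinearMap _).trans ?_
    refine Finset.sum_congr rfl fun i _ => ?_
    have hs : (fun j => if i = j then (1:ℝ) else 0) = (Pi.single i 1 : Fin m → ℝ) := by
      funext j; simp [Pi.single_apply, eq_comm]
    rw [← hHtgrad, smul_eq_mul, mul_comm, ← hs]
    rfl
  have h5 : HasDerivAt (fun s => hamIntegrand Φ Ht u x s) _ t :=
    (HasDerivAt.fun_sum (fun i (_ : i ∈ Finset.univ) => h1 i)).sub h3
  rw [h5.deriv, h4, ← Finset.sum_sub_distrib]
  refine Finset.sum_congr rfl fun i _ => ?_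
  have hid := pde_id Φ hΦ (u i) (hu i) (Fin.last n) (emb x t)
  rw [← hsol, neg_mul, sub_neg_eq_add]
  refine hid.trans ?_
  rw [Fin.sum_univ_castSucc, add_sub_cancel_right]
  rfl

/-- **Hamiltonian identity** for solutions of the quasilinear system
`-div(Φ'(|∇uᵢ|²)∇uᵢ) = Hᵢ(u)` on `ℝ^{n+1}` (dimensions `≥ 1`): writing
`x = (x', x_n)`, under the stated integrability, differentiation-under-the-integral
and vanishing-boundary-term assumptions, the quantity
`∫_{ℝⁿ} ( ∑ᵢ [ (1/2)Φ(|∇uᵢ|²) - Φ'(|∇uᵢ|²)|∂_{x_n}uᵢ|² ] - H̃(u) ) dx'`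
is independent of `x_n`. -/
theorem hamiltonian_identity
    (n m : ℕ) (hm : 1 ≤ m)
    (Φ : ℝ → ℝ) (hΦ : ContDiff ℝ 2 Φ) (hΦ0 : Φ 0 = 0)
    (hΦpos : ∀ s : ℝ, 0 < s → 0 < Φ s)
    (hΦ'pos : ∀ s : ℝ, 0 < s → 0 < deriv Φ s)
    (hΦell : ∀ s : ℝ, 0 < s → 0 < deriv Φ s + 2 * s * deriv (deriv Φ) s)
    (H : Fin m → (Fin m → ℝ) → ℝ) (hH : ∀ i, ContDiff ℝ 1 (H i))
    (Ht : (Fin m → ℝ) → ℝ) (hHt : ContDiff ℝ 2 Ht)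
    (hHtgrad : ∀ i y, fderiv ℝ Ht y (Pi.single i 1) = H i y)
    (u : Fin m → EuclideanSpace ℝ (Fin (n + 1)) → ℝ)
    (hu : ∀ i, ContDiff ℝ 2 (u i))
    (hsol : ∀ i x, -vdiv (fun y => deriv Φ (‖gradient (u i) y‖ ^ 2) • gradient (u i) y) x
        = H i (fun j => u j x))
    -- (i) integrability of the integrand on every horizontal slice
    (hint : ∀ t : ℝ, Integrable (fun x' : EuclideanSpace ℝ (Fin n) => hamIntegrand Φ Ht u x' t))
    -- (ii) differentiation under the integral sign is justified on every ball
    (hdiff : ∀ R : ℝ, 0 < R → ∀ t : ℝ,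
      HasDerivAt (fun s : ℝ => ∫ x' in ball (0 : EuclideanSpace ℝ (Fin n)) R,
          hamIntegrand Φ Ht u x' s)
        (∫ x' in ball (0 : EuclideanSpace ℝ (Fin n)) R,
          deriv (fun s : ℝ => hamIntegrand Φ Ht u x' s) t) t)
    -- (iii) the boundary terms vanish along a sequence of radii tending to infinity
    (hbdry : ∀ t : ℝ, ∃ R : ℕ → ℝ, Tendsto R atTop atTop ∧
      Tendsto (fun k => ∫ s in (0 : ℝ)..t,
          ∫ x' in sphere (0 : EuclideanSpace ℝ (Fin n)) (R k),
            ∑ i, deriv Φ (‖gradient (u i) (emb x' s)‖ ^ 2)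
              * ⟪gradient (fun y => u i (emb y s)) x', ‖x'‖⁻¹ • x'⟫
              * fderiv ℝ (u i) (emb x' s) (EuclideanSpace.single (Fin.last n) 1)
            ∂μH[(n : ℝ) - 1]) atTop (nhds 0)) :
    ∀ t : ℝ, (∫ x' : EuclideanSpace ℝ (Fin n), hamIntegrand Φ Ht u x' t)
      = ∫ x' : EuclideanSpace ℝ (Fin n), hamIntegrand Φ Ht u x' 0 := by
  obtain ⟨K, hK⟩ := div_thm' n
  set f : ℝ → Fin n → EE n → ℝ := fun s j x => ∑ i, flux Φ u i j.castSucc (emb x s) with hf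
  have hfl := flux_contDiff Φ hΦ u hu
  have hfc : ∀ s j, ContDiff ℝ 1 (f s j) := fun s j =>
    ContDiff.sum fun i _ => contDiff_emb _ s (hfl i _)
  have hfd : ∀ s j x, fderiv ℝ (f s j) x (EuclideanSpace.single j 1)
      = ∑ i, fderiv ℝ (flux Φ u i j.castSucc) (emb x s) (EuclideanSpace.single j.castSucc 1) := by
    intro s j x
    simp only [hf]
    rw [fderiv_fun_sum (fun i _ => (contDiff_emb _ s (hfl i _)).differentiable (by norm_num) x),
      _root_.sum_apply]
    refine Finset.sum_congr rfl fun i _ => ?_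
    exact fderiv_emb _ x s j ((hfl i _).differentiable (by norm_num) _)
  have hder : ∀ x s, deriv (fun s => hamIntegrand Φ Ht u x s) s
      = ∑ j, fderiv ℝ (f s j) x (EuclideanSpace.single j 1) := by
    intro x s
    rw [ham_deriv Φ hΦ H Ht hHt hHtgrad u hu hsol x s, Finset.sum_comm]
    simp only [hfd]
  have hcont : ∀ R : ℝ, Continuous (fun s : ℝ => ∫ x in ball (0 : EE n) R,
      deriv (fun s => hamIntegrand Φ Ht u x s) s) := by
    intro R
    have := continuous_parametric_integral_of_continuous
      (μ := (volume : Measure (EE n)).restrict (ball 0 R)) (s := closedBall 0 R)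
      (f := fun (s : ℝ) (x : EE n) => deriv (fun s => hamIntegrand Φ Ht u x s) s)
      (by
        have : (Function.uncurry fun (s : ℝ) (x : EE n) =>
            deriv (fun s => hamIntegrand Φ Ht u x s) s) = fun p : ℝ × EE n =>
            ∑ i, ∑ j : Fin n, fderiv ℝ (flux Φ u i j.castSucc) (embL n (p.2, p.1))
              (EuclideanSpace.single j.castSucc 1) := by
          funext p
          exact ham_deriv Φ hΦ H Ht hHt hHtgrad u hu hsol p.2 p.1
        rw [this]
        refine continuous_finsetSum _ fun i _ => continuous_finsetSum _ fun j _ => ?_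
        refine Continuous.clm_apply ?_ continuous_const
        exact ((hfl i _).continuous_fderiv (by norm_num)).comp (by fun_prop))
      (isCompact_closedBall 0 R)
    rw [Measure.restrict_restrict isClosed_closedBall.measurableSet,
      Set.inter_eq_right.2 ball_subset_closedBall] at this
    exact this
  intro t
  obtain ⟨R, hR, hlim⟩ := hbdry t
  have hG : ∀ s : ℝ, Tendsto (fun k => ∫ x in ball (0 : EE n) (R k), hamIntegrand Φ Ht u x s) atTop
      (nhds (∫ x, hamIntegrand Φ Ht u x s)) := fun s =>
    (aecover_ball hR).integral_tendsto_of_countably_generated (hint s)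
  have hdiffG := (hG t).sub (hG 0)
  have hlim' := hlim.const_mul K
  rw [mul_zero] at hlim'
  refine sub_eq_zero.1 (tendsto_nhds_unique hdiffG (hlim'.congr' ?_))
  filter_upwards [hR.eventually_gt_atTop 0] with k hk
  rw [← intervalIntegral.integral_eq_sub_of_hasDerivAt (fun s _ => hdiff (R k) hk s)
    ((hcont (R k)).intervalIntegrable _ _), ← intervalIntegral.integral_const_mul]
  congr 1
  funext s
  simp only [hder]
  rw [hK (f s) (hfc s) (R k) hk]
  congr 2
  funext x
  simp only [hf, Finset.sum_mul]
  rw [Finset.sum_comm]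
  refine Finset.sum_congr rfl fun i _ => ?_
  have hin : ⟪gradient (fun y => u i (emb y s)) x, ‖x‖⁻¹ • x⟫
      = ∑ j : Fin n, fderiv ℝ (u i) (emb x s) (EuclideanSpace.single j.castSucc 1)
        * (‖x‖⁻¹ * x j) := by
    rw [PiLp.inner_apply]
    refine Finset.sum_congr rfl fun j _ => ?_
    rw [grad_apply, fderiv_emb _ x s j ((hu i).differentiable (by norm_num) _)]
    simp
    ring
  rw [hin, Finset.mul_sum, Finset.sum_mul]
  refine Finset.sum_congr rfl fun j _ => ?_
  unfold flux
  ring
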